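/- (Leibniz rule for the Ψ-Caputo derivative in terms of Ψ-Riemann–Liouville derivatives.) Let 0 < α < 1, a < b, Ψ : ℝ → ℝ strictly increasing and continuously differentiable on [a,b] with Ψ'(t) > 0 for all t ∈ [a,b]. Suppose f = h ∘ Ψ and g = w ∘ Ψ with h, w real-analytic with everywhere-convergent power series, and write f⁽ᵏ⁾(x) := h⁽ᵏ⁾(Ψ(x)). Then for every x ∈ (a,b): (^{C}D^{α;Ψ}(f·g))(x) = Σ_{k=0}^∞ binom(α, k) f⁽ᵏ⁾(x) (^{RL}D^{α−k;Ψ} g)(x) − f(a) g(a) (Ψ(x) − Ψ(a))^{−α} / Γ(1−α), the series converging. -/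

import Mathlib

open Real

/-- Generalized binomial coefficient `binom(γ, n) = γ(γ-1)⋯(γ-n+1)/n!`. -/
noncomputable def genBinom (γ : ℝ) (n : ℕ) : ℝ :=
  (∏ i ∈ Finset.range n, (γ - (i : ℝ))) / (n.factorial : ℝ)

/-- Ψ-Riemann–Liouville fractional integral of order `α` with base point `a`;
by convention the order-0 integral is the identity. -/
noncomputable def psiI (a : ℝ) (Ψ f : ℝ → ℝ) (α : ℝ) (x : ℝ) : ℝ :=
  if α = 0 then f x
  else (Real.Gamma α)⁻¹ * ∫ t in a..x, deriv Ψ t * (Ψ x - Ψ t) ^ (α - 1) * f t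

/-- Ψ-Riemann–Liouville fractional derivative of order `γ` (for `γ ≤ 0` it is the
fractional integral of order `-γ`, the order-0 case being the identity). -/
noncomputable def psiRLD (a : ℝ) (Ψ f : ℝ → ℝ) (γ : ℝ) (x : ℝ) : ℝ :=
  if γ ≤ 0 then psiI a Ψ f (-γ) x
  else (deriv Ψ x)⁻¹ * deriv (fun y => psiI a Ψ f (1 - γ) y) x

/-- Ψ-Caputo fractional derivative of order `γ` (for `γ ≤ 0` it is the
fractional integral of order `-γ`). -/
noncomputable def psiCD (a : ℝ) (Ψ f : ℝ → ℝ) (γ : ℝ) (x : ℝ) : ℝ :=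
  if γ ≤ 0 then psiI a Ψ f (-γ) x
  else psiI a Ψ (fun t => (deriv Ψ t)⁻¹ * deriv f t) (1 - γ) x

/-- Ψ-Hilfer fractional derivative of order `α` and type `β`. -/
noncomputable def psiHD (a : ℝ) (Ψ f : ℝ → ℝ) (α β : ℝ) (x : ℝ) : ℝ :=
  psiI a Ψ
    (fun y => (deriv Ψ y)⁻¹ * deriv (fun z => psiI a Ψ f ((1 - β) * (1 - α)) z) y)
    (β * (1 - α)) x

/-- Classical Riemann–Liouville fractional integral with base point `a`. -/
noncomputable def rlI (a : ℝ) (α : ℝ) (f : ℝ → ℝ) (x : ℝ) : ℝ :=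
  if α = 0 then f x
  else (Real.Gamma α)⁻¹ * ∫ t in a..x, (x - t) ^ (α - 1) * f t

/-- Classical Riemann–Liouville fractional derivative (fractional integral for `γ ≤ 0`). -/
noncomputable def rlD (a : ℝ) (γ : ℝ) (f : ℝ → ℝ) (x : ℝ) : ℝ :=
  if γ ≤ 0 then rlI a (-γ) f x
  else deriv (fun y => rlI a (1 - γ) f y) x

/-- Classical Caputo fractional derivative (fractional integral for `γ ≤ 0`). -/
noncomputable def capD (a : ℝ) (γ : ℝ) (f : ℝ → ℝ) (x : ℝ) : ℝ :=
  if γ ≤ 0 then rlI a (-γ) f x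
  else rlI a (1 - γ) (deriv f) x

/-- Classical Hilfer fractional derivative of order `α` and type `β`. -/
noncomputable def hilD (a : ℝ) (α β : ℝ) (f : ℝ → ℝ) (x : ℝ) : ℝ :=
  rlI a (β * (1 - α))
    (fun y => deriv (fun z => rlI a ((1 - β) * (1 - α)) f z) y) x

/-- Hadamard fractional integral with base point `a`. -/
noncomputable def hadI (a : ℝ) (α : ℝ) (f : ℝ → ℝ) (x : ℝ) : ℝ :=
  if α = 0 then f x
  else (Real.Gamma α)⁻¹ * ∫ t in a..x, (Real.log x - Real.log t) ^ (α - 1) * f t / t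

/-- Caputo–Hadamard fractional derivative (Hadamard fractional integral for `γ ≤ 0`). -/
noncomputable def chD (a : ℝ) (γ : ℝ) (f : ℝ → ℝ) (x : ℝ) : ℝ :=
  if γ ≤ 0 then hadI a (-γ) f x
  else hadI a (1 - γ) (fun t => t * deriv f t) x

/-- `h` is real-analytic with a power series converging on all of `ℝ`. -/
def EntireReal (h : ℝ → ℝ) : Prop :=
  ∃ p : FormalMultilinearSeries ℝ ℝ ℝ, HasFPowerSeriesOnBall h p 0 ⊤

/-! Substituting `u = Ψ t` turns the Ψ-operators at `x` into the classical ones based at `A = Ψ a`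
and evaluated at `X = Ψ x`, and the Riemann–Liouville and Caputo derivatives of `h w` differ by the
boundary term of an integration by parts. It remains to differentiate `I^{1-α}(h w)` at `X`.

Write `h w = h(X) w + (s - X) q w` with `q` the difference quotient of `h` at `X`. Since
`s - X = (Y - X) - (Y - s)` and `I^β ((Y - s) G) (Y) = β I^{β+1} G (Y)`, the function
`I^{1-α} ((s - X) G)` has derivative `α I^{1-α} G (X)` at `X`. Hence
`D^α (h w) (X) = h(X) D^α w (X) + α I^{1-α} (q w) (X)`, and integrating the Taylor series of `q` at
`X` termwise against the weakly singular kernel produces the terms `k ≥ 1` of the Leibniz series. -/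

open MeasureTheory Set Filter Topology

section Triangle

variable {E : Type*} [NormedAddCommGroup E] {A X : ℝ}

theorem setIntegral_Ioc_indicator_Ioi [NormedSpace ℝ E] {s : ℝ} (hAs : A ≤ s) (hsX : s ≤ X)
    (φ : ℝ → E) :
    ∫ t in Ioc A X, (Ioi s).indicator φ t = ∫ t in s..X, φ t := by
  rw [setIntegral_indicator measurableSet_Ioi, Ioc_inter_Ioi, sup_eq_right.2 hAs,
    intervalIntegral.integral_of_le hsX]

theorem setIntegral_Ioc_indicator_Iio [NormedSpace ℝ E] {t : ℝ} (hAt : A ≤ t) (htX : t ≤ X)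
    (φ : ℝ → E) :
    ∫ s in Ioc A X, (Iio t).indicator φ s = ∫ s in A..t, φ s := by
  have hinter : Ioc A X ∩ Iio t = Ioo A t := by
    ext s
    exact ⟨fun h => ⟨h.1.1, h.2⟩, fun h => ⟨⟨h.1, h.2.le.trans htX⟩, h.2⟩⟩
  rw [setIntegral_indicator measurableSet_Iio, hinter, ← integral_Ioc_eq_integral_Ioo,
    intervalIntegral.integral_of_le hAt]

theorem integrable_indicator_triangle {F : ℝ → ℝ → E}
    (hmeas : StronglyMeasurable (Function.uncurry F))
    (hsection : ∀ s ∈ Ioc A X, IntervalIntegrable (F s) volume s X)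
    (hnorm : IntervalIntegrable (fun s => ∫ t in s..X, ‖F s t‖) volume A X) :
    Integrable ({p : ℝ × ℝ | p.1 < p.2}.indicator (Function.uncurry F))
      ((volume.restrict (Ioc A X)).prod (volume.restrict (Ioc A X))) := by
  refine (integrable_prod_iff (hmeas.indicator
    (measurableSet_lt measurable_fst measurable_snd)).aestronglyMeasurable).2 ⟨?_, ?_⟩
  · filter_upwards [ae_restrict_mem measurableSet_Ioc] with s hs
    have hint : IntegrableOn (F s) (Ioi s) (volume.restrict (Ioc A X)) := by
      rw [IntegrableOn, Measure.restrict_restrict measurableSet_Ioi, inter_comm, Ioc_inter_Ioi,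
        sup_eq_right.2 hs.1.le]
      exact (hsection s hs).1
    exact hint.integrable_indicator measurableSet_Ioi
  · refine hnorm.1.congr_fun (fun s hs => ?_) measurableSet_Ioc
    simp only [norm_indicator_eq_indicator_norm]
    exact (setIntegral_Ioc_indicator_Ioi hs.1.le hs.2 _).symm

theorem integral_integral_swap_triangle [NormedSpace ℝ E] {F : ℝ → ℝ → E} (hAX : A ≤ X)
    (hF : Integrable ({p : ℝ × ℝ | p.1 < p.2}.indicator (Function.uncurry F))
      ((volume.restrict (Ioc A X)).prod (volume.restrict (Ioc A X)))) :
    ∫ t in A..X, ∫ s in A..t, F s t = ∫ s in A..X, ∫ t in s..X, F s t := by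
  rw [intervalIntegral.integral_of_le hAX, intervalIntegral.integral_of_le hAX]
  calc ∫ t in Ioc A X, ∫ s in A..t, F s t
      = ∫ t in Ioc A X, ∫ s in Ioc A X,
          {p : ℝ × ℝ | p.1 < p.2}.indicator (Function.uncurry F) (s, t) :=
        setIntegral_congr_fun measurableSet_Ioc fun t ht =>
          (setIntegral_Ioc_indicator_Iio ht.1.le ht.2 fun s => F s t).symm
    _ = ∫ s in Ioc A X, ∫ t in Ioc A X,
          {p : ℝ × ℝ | p.1 < p.2}.indicator (Function.uncurry F) (s, t) :=
        (integral_integral_swap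
          (f := fun s t => {p : ℝ × ℝ | p.1 < p.2}.indicator (Function.uncurry F) (s, t)) hF).symm
    _ = ∫ s in Ioc A X, ∫ t in s..X, F s t :=
        setIntegral_congr_fun measurableSet_Ioc fun s hs =>
          setIntegral_Ioc_indicator_Ioi hs.1.le hs.2 (F s)

end Triangle

section Slope

variable {𝕜 E : Type*} [NontriviallyNormedField 𝕜] [NormedAddCommGroup E] [NormedSpace 𝕜 E]
  {c z : 𝕜} {f : 𝕜 → E}

theorem hasDerivAt_sub_smul_of_continuousAt (hf : ContinuousAt f c) :
    HasDerivAt (fun z => (z - c) • f z) (f c) c := by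
  refine hasDerivAt_iff_tendsto_slope.2 ((hf.tendsto.mono_left nhdsWithin_le_nhds).congr' ?_)
  filter_upwards [self_mem_nhdsWithin] with z hz
  rw [slope_def_module, sub_self, zero_smul, sub_zero, inv_smul_smul₀ (sub_ne_zero.2 hz)]

theorem continuous_dslope (hf : Continuous f) (hc : DifferentiableAt 𝕜 f c) :
    Continuous (dslope f c) :=
  continuousOn_univ.1 ((continuousOn_dslope univ_mem).2 ⟨hf.continuousOn, hc⟩)

variable [CompleteSpace E] [CharZero 𝕜] {p : FormalMultilinearSeries 𝕜 𝕜 E} {r : ENNReal}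

theorem hasSum_taylorSeries (hf : HasFPowerSeriesOnBall f p c r) (hz : z ∈ Metric.eball c r) :
    HasSum (fun k => ((z - c) ^ k / k.factorial) • iteratedDeriv k f c) (f z) := by
  have hsum := hf.hasSum_iteratedFDeriv (y := z - c) (by simpa [edist_eq_enorm_sub] using hz)
  simpa [iteratedFDeriv_apply_eq_iteratedDeriv_mul_prod, smul_smul, div_eq_inv_mul] using hsum

theorem hasSum_dslope (hf : HasFPowerSeriesOnBall f p c r) (hz : z ∈ Metric.eball c r) :
    HasSum (fun k => ((z - c) ^ k / (k + 1).factorial) • iteratedDeriv (k + 1) f c)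
      (dslope f c z) := by
  rcases eq_or_ne z c with rfl | hzc
  · have hconst := hasSum_single
      (f := fun k => ((z - z) ^ k / (k + 1).factorial) • iteratedDeriv (k + 1) f z) 0
      fun k hk => by simp [hk]
    simpa using hconst
  · have hne : z - c ≠ 0 := sub_ne_zero.2 hzc
    have htail := ((hasSum_nat_add_iff' 1).2 (hasSum_taylorSeries hf hz)).const_smul (z - c)⁻¹
    rw [dslope_of_ne _ hzc, slope_def_module]
    simpa [smul_smul, pow_succ', mul_div_assoc, inv_mul_cancel_left₀ hne] using htail

end Slope

section RiemannLiouville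

variable {A X β : ℝ} {f g : ℝ → ℝ}

theorem rlI_of_pos (hβ : 0 < β) (A : ℝ) (f : ℝ → ℝ) (X : ℝ) :
    rlI A β f X = (Gamma β)⁻¹ * ∫ s in A..X, (X - s) ^ (β - 1) * f s :=
  if_neg hβ.ne'

theorem intervalIntegrable_sub_rpow_mul {r : ℝ} (hr : -1 < r) (hf : Continuous f) :
    IntervalIntegrable (fun s => (X - s) ^ r * f s) volume A X := by
  have hkernel : IntervalIntegrable (fun u : ℝ => u ^ r) volume (X - A) 0 :=
    intervalIntegral.intervalIntegrable_rpow' hr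
  have hkernel_sub : IntervalIntegrable (fun s => (X - s) ^ r) volume A X := by
    simpa using hkernel.comp_sub_left X
  exact hkernel_sub.mul_continuousOn hf.continuousOn

theorem rlI_const_mul (A β c : ℝ) (f : ℝ → ℝ) (X : ℝ) :
    rlI A β (fun s => c * f s) X = c * rlI A β f X := by
  unfold rlI
  split_ifs
  · rfl
  · simp only [mul_left_comm _ c, intervalIntegral.integral_const_mul]

theorem rlI_add (hβ : 0 < β) (hf : Continuous f) (hg : Continuous g) (A X : ℝ) :
    rlI A β (fun s => f s + g s) X = rlI A β f X + rlI A β g X := by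
  have hr : -1 < β - 1 := by linarith
  simp only [rlI_of_pos hβ, mul_add]
  rw [intervalIntegral.integral_add (intervalIntegrable_sub_rpow_mul hr hf)
    (intervalIntegrable_sub_rpow_mul hr hg), mul_add]

theorem rlI_sub_mul (hβ : 0 < β) (hAX : A ≤ X) (f : ℝ → ℝ) :
    rlI A β (fun s => (X - s) * f s) X = β * rlI A (β + 1) f X := by
  rw [rlI_of_pos hβ, rlI_of_pos (by linarith), Gamma_add_one hβ.ne', mul_inv, ← mul_assoc,
    mul_inv_cancel_left₀ hβ.ne']
  congr 1
  refine intervalIntegral.integral_congr_uIoo fun s hs => ?_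
  rw [uIoo_of_le hAX] at hs
  have hXs : X - s ≠ 0 := by linarith [hs.2]
  simp only [add_sub_cancel_right]
  rw [← mul_assoc, ← rpow_add_one hXs, sub_add_cancel]

theorem rlI_sub_pow_mul (hβ : 0 < β) (hAX : A ≤ X) (f : ℝ → ℝ) (k : ℕ) :
    rlI A β (fun s => (X - s) ^ k * f s) X = Gamma (β + k) / Gamma β * rlI A (β + k) f X := by
  induction k generalizing β with
  | zero => simp [(Gamma_pos_of_pos hβ).ne']
  | succ k ih =>
    have hβ' : 0 < β + 1 := by linarith
    have hshift : β + 1 + k = β + (k + 1 : ℕ) := by push_cast; ring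
    simp only [pow_succ', mul_assoc]
    rw [rlI_sub_mul hβ hAX, ih hβ', hshift, Gamma_add_one hβ.ne']
    field_simp

theorem rlI_eq_integral_unitInterval (hβ : 0 < β) (hAX : A ≤ X) (f : ℝ → ℝ) :
    rlI A β f X = (Gamma β)⁻¹ *
      ((X - A) ^ β * ∫ τ in (0 : ℝ)..1, (1 - τ) ^ (β - 1) * f ((X - A) * τ + A)) := by
  rcases hAX.eq_or_lt with rfl | hAX
  · simp [rlI_of_pos hβ, zero_rpow hβ.ne']
  have hL : 0 < X - A := sub_pos.2 hAX
  have hsubst := intervalIntegral.mul_integral_comp_mul_add (a := 0) (b := 1)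
    (f := fun s => (X - s) ^ (β - 1) * f s) (X - A) A
  rw [mul_zero, zero_add, mul_one, sub_add_cancel] at hsubst
  have hhomog : ∀ τ ∈ uIcc (0 : ℝ) 1,
      (X - ((X - A) * τ + A)) ^ (β - 1) * f ((X - A) * τ + A) =
        (X - A) ^ (β - 1) * ((1 - τ) ^ (β - 1) * f ((X - A) * τ + A)) := by
    intro τ hτ
    rw [uIcc_of_le zero_le_one] at hτ
    have hfactor : X - ((X - A) * τ + A) = (X - A) * (1 - τ) := by ring
    rw [hfactor, mul_rpow hL.le (sub_nonneg.2 hτ.2), mul_assoc]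
  have hpow : (X - A) ^ β = (X - A) * (X - A) ^ (β - 1) := by
    rw [mul_comm, ← rpow_add_one hL.ne', sub_add_cancel]
  rw [rlI_of_pos hβ, ← hsubst, intervalIntegral.integral_congr hhomog,
    intervalIntegral.integral_const_mul, hpow, mul_assoc]

theorem continuousOn_rlI (hβ : 0 < β) (hf : Continuous f) (A : ℝ) :
    ContinuousOn (rlI A β f) (Ici A) := by
  have hr : -1 < β - 1 := by linarith
  -- Rescaling to `[0, 1]` fixes the singularity of the kernel; dominated convergence then applies.
  have hscaled : Continuous fun X => ∫ τ in (0 : ℝ)..1,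
      (1 - τ) ^ (β - 1) * f ((X - A) * τ + A) := by
    refine continuous_iff_continuousAt.2 fun X => ?_
    obtain ⟨M, hM⟩ : ∃ M, ∀ p ∈ Icc (X - 1) (X + 1) ×ˢ Icc (0 : ℝ) 1,
        ‖f ((p.1 - A) * p.2 + A)‖ ≤ M :=
      (isCompact_Icc.prod isCompact_Icc).exists_bound_of_continuousOn
        (Continuous.continuousOn (by fun_prop))
    refine intervalIntegral.continuousAt_of_dominated_interval
      (bound := fun τ => (1 - τ) ^ (β - 1) * M) (.of_forall fun Y => ?_) ?_
      (intervalIntegrable_sub_rpow_mul hr continuous_const) (.of_forall fun τ _ => by fun_prop)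
    · have hint : IntervalIntegrable (fun τ => (1 - τ) ^ (β - 1) * f ((Y - A) * τ + A))
          volume 0 1 := intervalIntegrable_sub_rpow_mul hr (by fun_prop)
      exact hint.def'.aestronglyMeasurable
    · filter_upwards [Icc_mem_nhds (sub_one_lt X) (lt_add_one X)] with Y hY
      refine .of_forall fun τ hτ => ?_
      rw [uIoc_of_le zero_le_one] at hτ
      have hτ1 : 0 ≤ 1 - τ := sub_nonneg.2 hτ.2
      rw [norm_mul, norm_of_nonneg (rpow_nonneg hτ1 _)]
      gcongr
      exact hM (Y, τ) ⟨hY, Ioc_subset_Icc_self hτ⟩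
  refine ContinuousOn.congr (Continuous.continuousOn ?_) fun X hX =>
    rlI_eq_integral_unitInterval hβ hX f
  exact continuous_const.mul
    (((continuous_id.sub continuous_const).rpow_const fun _ => .inr hβ.le).mul hscaled)


theorem intervalIntegrable_rpow_sub {r : ℝ} (hr : -1 < r) (s X : ℝ) :
    IntervalIntegrable (fun t => (t - s) ^ r) volume s X := by
  have hkernel : IntervalIntegrable (fun u : ℝ => u ^ r) volume 0 (X - s) :=
    intervalIntegral.intervalIntegrable_rpow' hr
  simpa using hkernel.comp_sub_right s

theorem integral_rpow_sub (hβ : 0 < β) (s X : ℝ) :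
    ∫ t in s..X, (t - s) ^ (β - 1) = (X - s) ^ β / β := by
  have hr : -1 < β - 1 := by linarith
  rw [intervalIntegral.integral_comp_sub_right (fun u => u ^ (β - 1)), sub_self,
    integral_rpow (.inl hr), sub_add_cancel, zero_rpow hβ.ne', sub_zero]

theorem integral_integral_rpow_sub_mul (hβ : 0 < β) (hAX : A ≤ X) (hf : Continuous f) :
    ∫ t in A..X, ∫ s in A..t, (t - s) ^ (β - 1) * f s =
      ∫ s in A..X, (X - s) ^ β / β * f s := by
  have hr : -1 < β - 1 := by linarith
  have hnorm : ∀ s ∈ Icc A X, ∫ t in s..X, ‖(t - s) ^ (β - 1) * f s‖ =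
      (X - s) ^ β / β * ‖f s‖ := by
    intro s hs
    rw [← integral_rpow_sub hβ, ← intervalIntegral.integral_mul_const]
    refine intervalIntegral.integral_congr fun t ht => ?_
    rw [uIcc_of_le hs.2] at ht
    simp only [norm_mul, norm_of_nonneg (rpow_nonneg (sub_nonneg.2 ht.1) _)]
  have hcont : ContinuousOn (fun s => (X - s) ^ β / β * ‖f s‖) (Icc A X) :=
    (((continuousOn_const.sub continuousOn_id).rpow_const fun _ _ => .inr hβ.le).div_const _).mul
      hf.norm.continuousOn
  rw [integral_integral_swap_triangle hAX (integrable_indicator_triangle ?_ ?_ ?_)]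
  · simp only [intervalIntegral.integral_mul_const, integral_rpow_sub hβ]
  · exact (((measurable_snd.sub measurable_fst).pow_const _).mul
      (hf.measurable.comp measurable_fst)).stronglyMeasurable
  · exact fun s _ => (intervalIntegrable_rpow_sub hr s X).mul_const _
  · exact (hcont.congr hnorm).intervalIntegrable_of_Icc hAX

theorem integral_rlI (hβ : 0 < β) (hAX : A ≤ X) (hf : Continuous f) :
    ∫ t in A..X, rlI A β f t = rlI A (β + 1) f X := by
  have hβ' : 0 < β + 1 := by linarith
  simp only [rlI_of_pos hβ, rlI_of_pos hβ', intervalIntegral.integral_const_mul]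
  rw [integral_integral_rpow_sub_mul hβ hAX hf, Gamma_add_one hβ.ne', mul_inv_rev]
  simp only [add_sub_cancel_right, div_eq_inv_mul, mul_assoc, intervalIntegral.integral_const_mul]

theorem hasDerivAt_rlI_add_one (hβ : 0 < β) (hAX : A < X) (hf : Continuous f) :
    HasDerivAt (rlI A (β + 1) f) (rlI A β f X) X := by
  have hcont := continuousOn_rlI hβ hf A
  have hev : rlI A (β + 1) f =ᶠ[𝓝 X] fun Y => ∫ t in A..Y, rlI A β f t := by
    filter_upwards [Ioi_mem_nhds hAX] with Y hY using (integral_rlI hβ hY.le hf).symm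
  refine HasDerivAt.congr_of_eventuallyEq ?_ hev
  refine intervalIntegral.integral_hasDerivAt_right
    (hcont.mono ?_).intervalIntegrable ?_ (hcont.continuousAt (Ici_mem_nhds hAX))
  · rw [uIcc_of_le hAX.le]
    exact Icc_subset_Ici_self
  · exact (hcont.mono Ioi_subset_Ici_self).stronglyMeasurableAtFilter isOpen_Ioi X hAX

theorem rlI_eq_add_rlI_deriv (hβ : 0 < β) (hAX : A ≤ X) (hf : ContDiff ℝ 1 f) :
    rlI A β f X = f A * (X - A) ^ β / Gamma (β + 1) + rlI A (β + 1) (deriv f) X := by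
  have hr : -1 < β - 1 := by linarith
  have hkernel : ∀ s < X, HasDerivAt (fun s => (X - s) ^ β) (-(β * (X - s) ^ (β - 1))) s := by
    intro s hs
    simpa using ((hasDerivAt_id s).const_sub X).rpow_const (.inl (sub_pos.2 hs).ne')
  have hkernel_int : IntervalIntegrable (fun s => -(β * (X - s) ^ (β - 1))) volume A X := by
    simpa [mul_comm] using intervalIntegrable_sub_rpow_mul hr (continuous_const (y := -β))
  have hparts := intervalIntegral.integral_mul_deriv_eq_deriv_mul_of_hasDerivAt
    (a := A) (b := X) (u := fun s => (X - s) ^ β) (v := f)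
    (ContinuousOn.rpow_const (by fun_prop) fun _ _ => .inr hβ.le) hf.continuous.continuousOn
    (fun s hs => hkernel s (by simpa [hAX] using hs.2))
    (fun s _ => (hf.differentiable one_ne_zero s).hasDerivAt) hkernel_int
    ((hf.continuous_deriv le_rfl).intervalIntegrable _ _)
  simp only [neg_mul, mul_assoc, intervalIntegral.integral_neg, intervalIntegral.integral_const_mul,
    sub_self, zero_rpow hβ.ne'] at hparts
  have hΓ := (Gamma_pos_of_pos hβ).ne'
  rw [rlI_of_pos hβ, rlI_of_pos (by linarith), Gamma_add_one hβ.ne', add_sub_cancel_right, hparts]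
  field_simp
  ring

theorem hasDerivAt_rlI (hβ : 0 < β) (hAX : A < X) (hf : ContDiff ℝ 1 f) :
    HasDerivAt (rlI A β f)
      (f A * (X - A) ^ (β - 1) / Gamma β + rlI A β (deriv f) X) X := by
  have hΓ := (Gamma_pos_of_pos hβ).ne'
  have hboundary : HasDerivAt (fun Y => f A * (Y - A) ^ β / Gamma (β + 1))
      (f A * (X - A) ^ (β - 1) / Gamma β) X := by
    refine ((((hasDerivAt_id X).sub_const A).rpow_const (p := β)
      (.inl (sub_pos.2 hAX).ne')).const_mul (f A) |>.div_const _).congr_deriv ?_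
    rw [Gamma_add_one hβ.ne', id]
    field_simp
  have hev : rlI A β f =ᶠ[𝓝 X]
      fun Y => f A * (Y - A) ^ β / Gamma (β + 1) + rlI A (β + 1) (deriv f) Y := by
    filter_upwards [Ioi_mem_nhds hAX] with Y hY using rlI_eq_add_rlI_deriv hβ (le_of_lt hY) hf
  exact (hboundary.add (hasDerivAt_rlI_add_one hβ hAX (hf.continuous_deriv le_rfl))
    ).congr_of_eventuallyEq hev

theorem rlD_eq_capD_add {α : ℝ} (hα0 : 0 < α) (hα1 : α < 1) (hAX : A < X)
    (hf : ContDiff ℝ 1 f) :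
    rlD A α f X = capD A α f X + f A * (X - A) ^ (-α) / Gamma (1 - α) := by
  have hderiv := (hasDerivAt_rlI (sub_pos.2 hα1) hAX hf).deriv
  rw [sub_sub_cancel_left] at hderiv
  rw [rlD, capD, if_neg hα0.not_ge, if_neg hα0.not_ge, hderiv, add_comm]

theorem hasDerivAt_rlI_sub_mul (hβ : 0 < β) (hAX : A < X) (hf : Continuous f) :
    HasDerivAt (rlI A β fun s => (s - X) * f s) ((1 - β) * rlI A β f X) X := by
  have hev : (rlI A β fun s => (s - X) * f s) =ᶠ[𝓝 X]
      fun Y => (Y - X) * rlI A β f Y + -β * rlI A (β + 1) f Y := by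
    filter_upwards [Ioi_mem_nhds hAX] with Y hY
    have hsplit : (fun s => (s - X) * f s) = fun s => (Y - X) * f s + -1 * ((Y - s) * f s) := by
      funext s
      ring
    rw [hsplit, rlI_add hβ (by fun_prop) (by fun_prop), rlI_const_mul, rlI_const_mul,
      rlI_sub_mul hβ (le_of_lt hY)]
    ring
  have hcont : ContinuousAt (rlI A β f) X :=
    (continuousOn_rlI hβ hf A).continuousAt (Ici_mem_nhds hAX)
  refine (((hasDerivAt_sub_smul_of_continuousAt hcont).add
    ((hasDerivAt_rlI_add_one hβ hAX hf).const_mul (-β))).congr_of_eventuallyEq hev).congr_deriv ?_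
  ring

theorem rlD_mul {α : ℝ} (hα0 : 0 < α) (hα1 : α < 1) (hAX : A < X) {h w : ℝ → ℝ}
    (hh : Continuous h) (hX : DifferentiableAt ℝ h X) (hw : ContDiff ℝ 1 w) :
    rlD A α (fun s => h s * w s) X =
      h X * rlD A α w X + α * rlI A (1 - α) (fun s => dslope h X s * w s) X := by
  have hβ : 0 < 1 - α := sub_pos.2 hα1
  have hq := continuous_dslope hh hX
  have hw' := hw.continuous
  have hsplit : (fun s => h s * w s) =
      fun s => h X * w s + (s - X) * (dslope h X s * w s) := by
    funext s
    have hdslope : (s - X) * dslope h X s = h s - h X := sub_smul_dslope h X s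
    rw [← mul_assoc, hdslope]
    ring
  have hrlI : rlI A (1 - α) (fun s => h s * w s) = fun Y => h X * rlI A (1 - α) w Y +
      rlI A (1 - α) (fun s => (s - X) * (dslope h X s * w s)) Y := by
    funext Y
    rw [hsplit, rlI_add hβ (by fun_prop) (by fun_prop), rlI_const_mul]
  have hderiv := ((hasDerivAt_rlI hβ hAX hw).differentiableAt.hasDerivAt.const_mul (h X)).add
    (hasDerivAt_rlI_sub_mul hβ hAX (hq.mul hw'))
  rw [sub_sub_cancel] at hderiv
  rw [rlD, rlD, if_neg hα0.not_ge, if_neg hα0.not_ge, hrlI]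
  exact hderiv.deriv

theorem hasSum_rlI (hβ : 0 < β) (hAX : A ≤ X) {F : ℕ → ℝ → ℝ} {u : ℕ → ℝ}
    (hF : ∀ k, Continuous (F k)) (hu : Summable u)
    (hbound : ∀ k, ∀ s ∈ Icc A X, ‖F k s‖ ≤ u k)
    (hsum : ∀ s ∈ Icc A X, HasSum (fun k => F k s) (f s)) :
    HasSum (fun k => rlI A β (F k) X) (rlI A β f X) := by
  have hr : -1 < β - 1 := by linarith
  have hIcc : ∀ {s}, s ∈ uIoc A X → s ∈ Icc A X := fun hs =>
    Ioc_subset_Icc_self (uIoc_of_le hAX ▸ hs)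
  simp only [rlI_of_pos hβ]
  refine HasSum.mul_left _ (intervalIntegral.hasSum_integral_of_dominated_convergence
    (fun k s => (X - s) ^ (β - 1) * u k)
    (fun k => (intervalIntegrable_sub_rpow_mul hr (hF k)).def'.aestronglyMeasurable)
    (fun k => .of_forall fun s hs => ?_) (.of_forall fun s _ => hu.mul_left _) ?_
    (.of_forall fun s hs => (hsum s (hIcc hs)).mul_left _))
  · have hkernel := rpow_nonneg (sub_nonneg.2 (hIcc hs).2) (β - 1)
    rw [norm_mul, norm_of_nonneg hkernel]
    exact mul_le_mul_of_nonneg_left (hbound k s (hIcc hs)) hkernel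
  · simpa only [tsum_mul_left] using intervalIntegrable_sub_rpow_mul hr continuous_const

theorem genBinom_succ_eq_Gamma {α : ℝ} (hα1 : α < 1) (k : ℕ) :
    genBinom α (k + 1) =
      α * (-1) ^ k * (Gamma (1 - α + k) / Gamma (1 - α)) / (k + 1).factorial := by
  have hΓ := (Gamma_pos_of_pos (sub_pos.2 hα1)).ne'
  rw [genBinom]
  congr 1
  induction k with
  | zero => simp [hΓ]
  | succ k ih =>
    have hne : 1 - α + k ≠ 0 := (add_pos_of_pos_of_nonneg (sub_pos.2 hα1) k.cast_nonneg).ne'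
    rw [Finset.prod_range_succ, ih]
    push_cast
    rw [← add_assoc (1 - α), Gamma_add_one hne]
    ring

theorem hasSum_rlI_dslope_mul (hβ : 0 < β) (hAX : A ≤ X) {h w : ℝ → ℝ}
    {p : FormalMultilinearSeries ℝ ℝ ℝ} {r : ENNReal} (hh : HasFPowerSeriesOnBall h p X r)
    (hA : A ∈ Metric.eball X r) (hw : Continuous w) :
    HasSum (fun k => iteratedDeriv (k + 1) h X / (k + 1).factorial *
        ((-1) ^ k * (Gamma (β + k) / Gamma β)) * rlI A (β + k) w X)
      (rlI A β (fun s => dslope h X s * w s) X) := by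
  obtain ⟨M, hM⟩ := (isCompact_Icc (a := A) (b := X)).exists_bound_of_continuousOn hw.continuousOn
  have hdist : ∀ s ∈ Icc A X, ‖s - X‖ ≤ ‖A - X‖ := fun s hs => by
    rw [norm_sub_rev, norm_sub_rev A, norm_of_nonneg (sub_nonneg.2 hs.2),
      norm_of_nonneg (sub_nonneg.2 hAX)]
    exact sub_le_sub_left hs.1 X
  have hball : ∀ s ∈ Icc A X, s ∈ Metric.eball X r := fun s hs => by
    refine Metric.mem_eball.2 (lt_of_le_of_lt ?_ (Metric.mem_eball.1 hA))
    rw [edist_dist, edist_dist]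
    exact ENNReal.ofReal_le_ofReal (hdist s hs)
  have hterms := hasSum_rlI hβ hAX
    (F := fun k s => (s - X) ^ k / (k + 1).factorial * iteratedDeriv (k + 1) h X * w s)
    (fun k => by fun_prop) ((hasSum_dslope hh hA).summable.norm.mul_right M)
    (fun k s hs => by
      rw [norm_mul, norm_smul, norm_mul, norm_div, norm_div, norm_pow, norm_pow]
      have hsM := hM s hs
      have hsA := hdist s hs
      gcongr)
    (fun s hs => (hasSum_dslope hh (hball s hs)).mul_right (w s))
  refine hterms.congr_fun fun k => ?_
  have hsign : ∀ s, (s - X) ^ k / (k + 1).factorial * iteratedDeriv (k + 1) h X * w s =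
      iteratedDeriv (k + 1) h X / (k + 1).factorial * (-1) ^ k * ((X - s) ^ k * w s) := by
    intro s
    rw [← neg_sub X s, neg_pow]
    ring
  simp only [hsign, rlI_const_mul, rlI_sub_pow_mul hβ hAX]
  ring

theorem hasSum_rlD_mul {α : ℝ} (hα0 : 0 < α) (hα1 : α < 1) (hAX : A < X) {h w : ℝ → ℝ}
    {p : FormalMultilinearSeries ℝ ℝ ℝ} {r : ENNReal} (hh : HasFPowerSeriesOnBall h p X r)
    (hA : A ∈ Metric.eball X r) (hhc : Continuous h) (hw : ContDiff ℝ 1 w) :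
    HasSum (fun k : ℕ => genBinom α k * iteratedDeriv k h X * rlD A (α - k) w X)
      (rlD A α (fun s => h s * w s) X) := by
  have hβ : 0 < 1 - α := sub_pos.2 hα1
  have hX : DifferentiableAt ℝ h X := hh.analyticAt.differentiableAt
  have hrlD : ∀ k : ℕ, rlD A (α - (k + 1 : ℕ)) w X = rlI A (1 - α + k) w X := by
    intro k
    have horder : α - (k + 1 : ℕ) = -(1 - α + k) := by push_cast; ring
    rw [rlD, horder, neg_neg, if_pos (neg_nonpos.2 (add_nonneg hβ.le k.cast_nonneg))]
  refine (hasSum_nat_add_iff' 1).1 ?_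
  have htail := (hasSum_rlI_dslope_mul hβ hAX.le hh hA hw.continuous).mul_left α
  have hhead : genBinom α 0 * iteratedDeriv 0 h X * rlD A (α - (0 : ℕ)) w X =
      h X * rlD A α w X := by simp [genBinom]
  rw [Finset.sum_range_one, hhead, rlD_mul hα0 hα1 hAX hhc hX hw, add_sub_cancel_left]
  refine htail.congr_fun fun k => ?_
  rw [hrlD, genBinom_succ_eq_Gamma hα1]
  ring

end RiemannLiouville

section Substitution

variable {a x : ℝ} {Ψ : ℝ → ℝ}

theorem continuousOn_of_deriv_pos (hΨ : ∀ t ∈ Icc a x, 0 < deriv Ψ t) :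
    ContinuousOn Ψ (Icc a x) :=
  fun t ht => (differentiableAt_of_deriv_ne_zero (hΨ t ht).ne').continuousAt.continuousWithinAt

theorem strictMonoOn_Icc_of_deriv_pos (hΨ : ∀ t ∈ Icc a x, 0 < deriv Ψ t) :
    StrictMonoOn Ψ (Icc a x) :=
  strictMonoOn_of_deriv_pos (convex_Icc a x) (continuousOn_of_deriv_pos hΨ)
    fun t ht => hΨ t (interior_subset ht)

theorem psiI_comp (hax : a ≤ x) (hΨ : ∀ t ∈ Icc a x, 0 < deriv Ψ t) (F : ℝ → ℝ) (β : ℝ) :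
    psiI a Ψ (fun t => F (Ψ t)) β x = rlI (Ψ a) β F (Ψ x) := by
  have hΨax : Ψ a ≤ Ψ x := (strictMonoOn_Icc_of_deriv_pos hΨ).monotoneOn
    (left_mem_Icc.2 hax) (right_mem_Icc.2 hax) hax
  have hsubst := integral_Icc_deriv_smul_of_deriv_nonneg (continuousOn_of_deriv_pos hΨ)
    (fun t ht =>
      (differentiableAt_of_deriv_ne_zero (hΨ t (Ioo_subset_Icc_self ht)).ne').hasDerivAt)
    (fun t ht => (hΨ t (Ioo_subset_Icc_self ht)).le) hax
    (g := fun s => (Ψ x - s) ^ (β - 1) * F s)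
  rw [psiI, rlI, intervalIntegral.integral_of_le hax, intervalIntegral.integral_of_le hΨax,
    ← integral_Icc_eq_integral_Ioc, ← integral_Icc_eq_integral_Ioc, ← hsubst]
  simp only [smul_eq_mul, mul_assoc]

theorem psiI_congr {f g : ℝ → ℝ} (hax : a ≤ x) (hfg : EqOn f g (Icc a x)) (Ψ : ℝ → ℝ) (β : ℝ) :
    psiI a Ψ f β x = psiI a Ψ g β x := by
  have hint : ∫ t in a..x, deriv Ψ t * (Ψ x - Ψ t) ^ (β - 1) * f t =
      ∫ t in a..x, deriv Ψ t * (Ψ x - Ψ t) ^ (β - 1) * g t :=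
    intervalIntegral.integral_congr fun t ht =>
      congrArg (_ * ·) (hfg (uIcc_of_le hax ▸ ht))
  rw [psiI, psiI, hfg (right_mem_Icc.2 hax), hint]

theorem psiCD_comp {F : ℝ → ℝ} (hax : a ≤ x) (hΨ : ∀ t ∈ Icc a x, 0 < deriv Ψ t)
    (hF : Differentiable ℝ F) (γ : ℝ) :
    psiCD a Ψ (fun t => F (Ψ t)) γ x = capD (Ψ a) γ F (Ψ x) := by
  have hderiv : EqOn (fun t => (deriv Ψ t)⁻¹ * deriv (fun z => F (Ψ z)) t)
      (fun t => deriv F (Ψ t)) (Icc a x) := fun t ht => by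
    have hne := (hΨ t ht).ne'
    have hchain : deriv (fun z => F (Ψ z)) t = deriv F (Ψ t) * deriv Ψ t :=
      deriv_comp t (hF (Ψ t)) (differentiableAt_of_deriv_ne_zero hne)
    simp only [hchain]
    field_simp
  rw [psiCD, capD, psiI_comp hax hΨ, psiI_congr hax hderiv, psiI_comp hax hΨ]

theorem psiRLD_comp {b γ : ℝ} {F : ℝ → ℝ} (hx : x ∈ Ioo a b)
    (hΨ : ∀ t ∈ Icc a b, 0 < deriv Ψ t)
    (hF : 0 < γ → DifferentiableAt ℝ (rlI (Ψ a) (1 - γ) F) (Ψ x)) :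
    psiRLD a Ψ (fun t => F (Ψ t)) γ x = rlD (Ψ a) γ F (Ψ x) := by
  have hpsiI : ∀ y ∈ Ioo a b, ∀ β, psiI a Ψ (fun t => F (Ψ t)) β y = rlI (Ψ a) β F (Ψ y) :=
    fun y hy => psiI_comp hy.1.le (fun t ht => hΨ t ⟨ht.1, ht.2.trans hy.2.le⟩) F
  rw [psiRLD, rlD]
  split_ifs with hγ
  · exact hpsiI x hx _
  · have hev : (fun y => psiI a Ψ (fun t => F (Ψ t)) (1 - γ) y) =ᶠ[𝓝 x]
        fun y => rlI (Ψ a) (1 - γ) F (Ψ y) := by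
      filter_upwards [Ioo_mem_nhds hx.1 hx.2] with y hy using hpsiI y hy _
    have hne := (hΨ x (Ioo_subset_Icc_self hx)).ne'
    have hchain : deriv (fun y => rlI (Ψ a) (1 - γ) F (Ψ y)) x =
        deriv (rlI (Ψ a) (1 - γ) F) (Ψ x) * deriv Ψ x :=
      deriv_comp x (hF (not_le.1 hγ)) (differentiableAt_of_deriv_ne_zero hne)
    rw [hev.deriv_eq, hchain]
    field_simp

end Substitution

theorem leibniz_psi_Caputo_via_RL_general {a b x α : ℝ} (hα0 : 0 < α) (hα1 : α < 1)
    (hx : x ∈ Ioo a b) {Ψ h w : ℝ → ℝ} (hΨ : ∀ t ∈ Icc a b, 0 < deriv Ψ t)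
    {p : FormalMultilinearSeries ℝ ℝ ℝ} {r : ENNReal} (hp : HasFPowerSeriesOnBall h p (Ψ x) r)
    (har : Ψ a ∈ Metric.eball (Ψ x) r) (hh : ContDiff ℝ 1 h) (hw : ContDiff ℝ 1 w) :
    HasSum
      (fun k : ℕ => genBinom α k * iteratedDeriv k h (Ψ x) *
        psiRLD a Ψ (fun t => w (Ψ t)) (α - k) x)
      (psiCD a Ψ (fun t => h (Ψ t) * w (Ψ t)) α x +
        h (Ψ a) * w (Ψ a) * (Ψ x - Ψ a) ^ (-α) / Gamma (1 - α)) := by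
  have hΨx : ∀ t ∈ Icc a x, 0 < deriv Ψ t := fun t ht => hΨ t ⟨ht.1, ht.2.trans hx.2.le⟩
  have hhw : ContDiff ℝ 1 fun s => h s * w s := hh.mul hw
  have hax : Ψ a < Ψ x := strictMonoOn_Icc_of_deriv_pos hΨx
    (left_mem_Icc.2 hx.1.le) (right_mem_Icc.2 hx.1.le) hx.1
  have hRL : ∀ k : ℕ, psiRLD a Ψ (fun t => w (Ψ t)) (α - k) x = rlD (Ψ a) (α - k) w (Ψ x) :=
    fun k => psiRLD_comp hx hΨ fun _ => (hasDerivAt_rlI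
      (sub_pos.2 (by linarith [k.cast_nonneg (α := ℝ)])) hax hw).differentiableAt
  have hC : psiCD a Ψ (fun t => h (Ψ t) * w (Ψ t)) α x =
      capD (Ψ a) α (fun s => h s * w s) (Ψ x) :=
    psiCD_comp hx.1.le hΨx (hhw.differentiable one_ne_zero) α
  simp only [hRL, hC, ← rlD_eq_capD_add hα0 hα1 hax hhw]
  exact hasSum_rlD_mul hα0 hα1 hax hp har hh.continuous hw

theorem EntireReal.contDiff {h : ℝ → ℝ} (hh : EntireReal h) : ContDiff ℝ 1 h := by
  obtain ⟨p, hp⟩ := hh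
  exact AnalyticOnNhd.contDiff (by simpa using hp.analyticOnNhd)

theorem EntireReal.exists_hasFPowerSeriesOnBall {h : ℝ → ℝ} (hh : EntireReal h) (X : ℝ) :
    ∃ p : FormalMultilinearSeries ℝ ℝ ℝ, HasFPowerSeriesOnBall h p X ⊤ := by
  obtain ⟨p, hp⟩ := hh
  exact ⟨p.changeOrigin X, by simpa using hp.changeOrigin (y := X) (by simp)⟩

/-- Leibniz rule for the Ψ-Caputo derivative expressed in terms of
Ψ-Riemann–Liouville derivatives. -/
theorem leibniz_psi_Caputo_via_RL
    (a b : ℝ) (hab : a < b) (α : ℝ) (hα0 : 0 < α) (hα1 : α < 1)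
    (Ψ : ℝ → ℝ)
    (hΨmono : StrictMonoOn Ψ (Set.Icc a b))
    (hΨC1 : ContDiffOn ℝ 1 Ψ (Set.Icc a b))
    (hΨpos : ∀ t ∈ Set.Icc a b, 0 < deriv Ψ t)
    (f g h w : ℝ → ℝ)
    (hf : f = fun t => h (Ψ t)) (hg : g = fun t => w (Ψ t))
    (hh : EntireReal h) (hw : EntireReal w)
    (x : ℝ) (hx : x ∈ Set.Ioo a b) :
    HasSum
      (fun k : ℕ => genBinom α k * iteratedDeriv k h (Ψ x) * psiRLD a Ψ g (α - k) x)
      (psiCD a Ψ (fun t => f t * g t) α x +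
        f a * g a * (Ψ x - Ψ a) ^ (-α) / Real.Gamma (1 - α)) := by
  obtain ⟨p, hp⟩ := hh.exists_hasFPowerSeriesOnBall (Ψ x)
  subst hf hg
  exact leibniz_psi_Caputo_via_RL_general hα0 hα1 hx hΨpos hp (by simp) hh.contDiff hw.contDiff
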